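/- arXiv:1611.02543 — 3 statements merged into one kernel-verified Lean document; each statement's English description precedes it below -/
import Mathlib

section
/- Let S be a finite set of at least three points in ℝ² such that no three pairwise distinct points of S are collinear, and let x₀ ∈ S be an extreme point of the convex hull of S. Then there exists x₁ ∈ S with x₁ ≠ x₀ such that all points of S other than x₀ and x₁ lie strictly on one side of the line through x₀ and x₁; that is, S \ {x₀, x₁} is contained in one of the two open half-planes determined by the line through x₀ and x₁. -/
/-!
A linear functional separating `x₀` strictly from the convex hull of the other points is positive
on all the vectors `x - x₀`, so these vectors lie in an open half-plane, where they are totally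
preordered by their slope relative to the functional. An edge of the hull at `x₀` points in the
direction of least slope: every other `x - x₀` then lies weakly to its left, and strictly so
unless `x` is on the line carrying the edge.
-/

open scoped InnerProductSpace

noncomputable section

/-- The Euclidean plane. -/
abbrev Plane : Type := EuclideanSpace ℝ (Fin 2)

/-- The line through `a` and `b`: the affine span of `{a, b}`. -/
def line (a b : Plane) : AffineSubspace ℝ Plane := affineSpan ℝ {a, b}

theorem exists_forall_lt_of_mem_extremePoints_convexHull {E : Type*} [AddCommGroup E] [Module ℝ E]
    [TopologicalSpace E] [IsTopologicalAddGroup E] [ContinuousSMul ℝ E] [LocallyConvexSpace ℝ E]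
    [T2Space E] {s : Set E} (hs : s.Finite) {x₀ : E}
    (hx₀ : x₀ ∈ (convexHull ℝ s).extremePoints ℝ) :
    ∃ f : StrongDual ℝ E, ∀ x ∈ s, x ≠ x₀ → f x₀ < f x := by
  have hx₀_notMem : x₀ ∉ convexHull ℝ (s \ {x₀}) := fun h ↦
    ((convex_convexHull ℝ s).mem_extremePoints_iff_mem_sdiff_convexHull_sdiff.mp hx₀).2
      (convexHull_mono (Set.sdiff_subset_sdiff_left (subset_convexHull ℝ s)) h)
  obtain ⟨f, c, hfx₀, hf⟩ := geometric_hahn_banach_point_closed (convex_convexHull ℝ (s \ {x₀}))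
    (hs.sdiff.isClosed_convexHull ℝ) hx₀_notMem
  exact ⟨f, fun x hx hne ↦ hfx₀.trans (hf x (subset_convexHull ℝ _ ⟨hx, hne⟩))⟩

section OrientedPlane

variable {V : Type*} [NormedAddCommGroup V] [InnerProductSpace ℝ V]
  [Fact (Module.finrank ℝ V = 2)] (o : Orientation ℝ V (Fin 2))

theorem areaForm_nonneg_iff_div_le_div {a u v : V} (hu : 0 < ⟪a, u⟫_ℝ) (hv : 0 < ⟪a, v⟫_ℝ) :
    0 ≤ o.areaForm u v ↔ o.areaForm a u / ⟪a, u⟫_ℝ ≤ o.areaForm a v / ⟪a, v⟫_ℝ := by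
  have ha : a ≠ 0 := by
    rintro rfl
    simp at hu
  have ha_sq : 0 < ‖a‖ ^ 2 := pow_pos (norm_pos_iff.mpr ha) 2
  rw [div_le_div_iff₀ hu hv, ← mul_nonneg_iff_of_pos_left ha_sq, ← o.inner_mul_areaForm_sub,
    sub_nonneg, mul_comm ⟪a, u⟫_ℝ]

theorem exists_forall_areaForm_nonneg {ι : Type*} {s : Finset ι} (hs : s.Nonempty) {v : ι → V}
    {f : StrongDual ℝ V} (hf : ∀ i ∈ s, 0 < f (v i)) :
    ∃ i ∈ s, ∀ j ∈ s, 0 ≤ o.areaForm (v i) (v j) := by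
  have : FiniteDimensional ℝ V := .of_fact_finrank_eq_two
  have : CompleteSpace V := FiniteDimensional.complete ℝ V
  obtain ⟨a, rfl⟩ := (InnerProductSpace.toDual ℝ V).surjective f
  simp only [InnerProductSpace.toDual_apply_apply] at hf
  obtain ⟨i, hi, hmin⟩ := s.exists_min_image (fun j ↦ o.areaForm a (v j) / ⟪a, v j⟫_ℝ) hs
  exact ⟨i, hi, fun j hj ↦
    (areaForm_nonneg_iff_div_le_div o (hf i hi) (hf j hj)).mpr (hmin j hj)⟩

theorem areaForm_eq_zero_iff_mem_span_singleton {u v : V} (hu : u ≠ 0) :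
    o.areaForm u v = 0 ↔ v ∈ ℝ ∙ u := by
  rw [Submodule.mem_span_singleton]
  constructor
  · intro h
    refine ⟨⟪u, v⟫_ℝ / ‖u‖ ^ 2, ext_inner_right ℝ fun w ↦ ?_⟩
    have h_inner : ⟪u, v⟫_ℝ * ⟪u, w⟫_ℝ = ‖u‖ ^ 2 * ⟪v, w⟫_ℝ := by
      simpa [h] using o.inner_mul_inner_add_areaForm_mul_areaForm u v w
    rw [real_inner_smul_left, div_mul_eq_mul_div, h_inner,
      mul_div_cancel_left₀ _ (pow_ne_zero 2 (norm_ne_zero_iff.mpr hu))]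
  · rintro ⟨r, rfl⟩
    simp

/-- The unit normal of the line through `p` and `q` that points to the left of the direction from
`p` to `q`, used as the inner normal of an edge. It is `0` if `p = q`. -/
def leftNormal (p q : V) : V := o.rightAngleRotation (NormedSpace.normalize (q - p))

theorem norm_leftNormal {p q : V} (hpq : p ≠ q) : ‖leftNormal o p q‖ = 1 := by
  rw [leftNormal, LinearIsometryEquiv.norm_map,
    NormedSpace.norm_normalize (sub_ne_zero.mpr hpq.symm)]

theorem inner_leftNormal (p q v : V) :
    ⟪leftNormal o p q, v⟫_ℝ = ‖q - p‖⁻¹ * o.areaForm (q - p) v := by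
  rw [leftNormal, o.inner_rightAngleRotation_left, NormedSpace.normalize, map_smul,
    LinearMap.smul_apply, smul_eq_mul]

theorem inner_leftNormal_nonneg {p q v : V} (h : 0 ≤ o.areaForm (q - p) v) :
    0 ≤ ⟪leftNormal o p q, v⟫_ℝ := by
  rw [inner_leftNormal]
  positivity

theorem inner_leftNormal_eq_zero_iff {p q v : V} (hpq : p ≠ q) :
    ⟪leftNormal o p q, v⟫_ℝ = 0 ↔ v ∈ line[ℝ, p, q].direction := by
  have hsub : q - p ≠ 0 := sub_ne_zero.mpr hpq.symm
  rw [inner_leftNormal, mul_eq_zero_iff_left (inv_ne_zero (norm_ne_zero_iff.mpr hsub)),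
    areaForm_eq_zero_iff_mem_span_singleton o hsub, Submodule.mem_span_singleton,
    direction_affineSpan, mem_vectorSpan_pair_rev, vsub_eq_sub]

end OrientedPlane

theorem exists_supporting_edge_general {V : Type*} [NormedAddCommGroup V] [InnerProductSpace ℝ V]
    [Fact (Module.finrank ℝ V = 2)] {S : Finset V} (hS : S.Nontrivial) {x₀ : V}
    (hx₀ : x₀ ∈ (convexHull ℝ (S : Set V)).extremePoints ℝ) :
    ∃ x₁ ∈ S, x₁ ≠ x₀ ∧
      ∃ n : V, ‖n‖ = 1 ∧ (∀ v ∈ line[ℝ, x₀, x₁].direction, ⟪n, v⟫_ℝ = 0) ∧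
        ∀ x ∈ S, x ∉ line[ℝ, x₀, x₁] → 0 < ⟪n, x - x₀⟫_ℝ := by
  classical
  have : FiniteDimensional ℝ V := .of_fact_finrank_eq_two
  let o : Orientation ℝ V (Fin 2) := (Module.finBasisOfFinrankEq ℝ V Fact.out).orientation
  obtain ⟨f, hf⟩ := exists_forall_lt_of_mem_extremePoints_convexHull S.finite_toSet hx₀
  have hf_pos : ∀ x ∈ S.erase x₀, 0 < f (x - x₀) := fun x hx ↦ by
    obtain ⟨hne, hxS⟩ := Finset.mem_erase.mp hx
    simpa using hf x hxS hne
  obtain ⟨x₁, hx₁, hleft⟩ := exists_forall_areaForm_nonneg o hS.erase_nonempty hf_pos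
  obtain ⟨hne, hx₁S⟩ := Finset.mem_erase.mp hx₁
  refine ⟨x₁, hx₁S, hne, leftNormal o x₀ x₁, norm_leftNormal o hne.symm,
    fun v ↦ (inner_leftNormal_eq_zero_iff o hne.symm).mpr, fun x hxS hx ↦ ?_⟩
  have hx_ne : x ≠ x₀ := fun h ↦ hx (h ▸ left_mem_affineSpan_pair ℝ x₀ x₁)
  have h_nonneg : 0 ≤ ⟪leftNormal o x₀ x₁, x - x₀⟫_ℝ :=
    inner_leftNormal_nonneg o (hleft x (Finset.mem_erase.mpr ⟨hx_ne, hxS⟩))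
  have h_ne : ⟪leftNormal o x₀ x₁, x - x₀⟫_ℝ ≠ 0 := fun h ↦ hx <|
    (AffineSubspace.vsub_right_mem_direction_iff_mem (left_mem_affineSpan_pair ℝ x₀ x₁) x).mp <|
      (inner_leftNormal_eq_zero_iff o hne.symm).mp h
  exact h_nonneg.lt_of_ne' h_ne

/-- Let `S` be a finite set of at least three points of the plane, no three pairwise
distinct points of which are collinear, and let `x₀ ∈ S` be an extreme point of the convex
hull of `S`.  Then there is `x₁ ∈ S`, `x₁ ≠ x₀`, such that all points of `S` other than
`x₀, x₁` lie in one of the two open half-planes determined by the line through `x₀` and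
`x₁`; the half-plane is described via a unit normal `n` to the line. -/
theorem exists_supporting_edge
    (S : Finset Plane) (hScard : 3 ≤ S.card)
    (hgen : ∀ x ∈ S, ∀ y ∈ S, ∀ z ∈ S, x ≠ y → x ≠ z → y ≠ z → x ∉ line y z)
    (x₀ : Plane) (hx₀S : x₀ ∈ S)
    (hx₀ext : x₀ ∈ Set.extremePoints ℝ (convexHull ℝ (S : Set Plane))) :
    ∃ x₁ ∈ S, x₁ ≠ x₀ ∧
      ∃ n : Plane, ‖n‖ = 1 ∧ (∀ v ∈ (line x₀ x₁).direction, ⟪n, v⟫_ℝ = 0) ∧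
        ∀ x ∈ S, x ≠ x₀ → x ≠ x₁ → 0 < ⟪n, x - x₀⟫_ℝ := by
  have hfin : Fact (Module.finrank ℝ Plane = 2) := ⟨finrank_euclideanSpace_fin⟩
  obtain ⟨x₁, hx₁S, hne, n, hn, hn_orth, hpos⟩ :=
    exists_supporting_edge_general (Finset.one_lt_card_iff_nontrivial.mp (by omega)) hx₀ext
  exact ⟨x₁, hx₁S, hne, n, hn, hn_orth, fun x hxS h₀ h₁ ↦
    hpos x hxS (hgen x hxS x₀ hx₀S x₁ hx₁S h₀ h₁ hne.symm)⟩
end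
end

section
/- Let a be a real number with a ≠ 0 and |a| < 2, and let S = {(-1,-1), (-1,1), (1,1), (1,-1), (1+a, 0), (-1+a, 0)} ⊆ ℝ². Then at least one of the two points (1+a, 0) and (-1+a, 0) is an extreme point of the convex hull of S; specifically, if a > 0 then (1+a,0) is an extreme point of the convex hull of S, and if a < 0 then (-1+a,0) is an extreme point of the convex hull of S. -/
noncomputable section

/-- The point of the plane with coordinates `(x, y)`. -/
def pt (x y : ℝ) : Plane := (WithLp.equiv 2 (Fin 2 → ℝ)).symm ![x, y]

/-!
When `0 < a`, the first coordinate attains its maximum over `S` only at `(1 + a, 0)`; when `a < 0`,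
it attains its minimum only at `(-1 + a, 0)`. A strict maximum of a convex function over a set
remains a strict maximum over the convex hull, so it is an extreme point there.
-/

section StrictMaximum

variable {𝕜 E β : Type*} [Semiring 𝕜] [PartialOrder 𝕜] [AddCommMonoid E] [AddCommMonoid β]
  [LinearOrder β] [IsOrderedCancelAddMonoid β] [Module 𝕜 E] [Module 𝕜 β]
  [PosSMulStrictMono 𝕜 β] {C S : Set E} {f : E → β} {x : E}

lemma lt_left_of_mem_openSegment_of_convexOn (hf : ConvexOn 𝕜 C f) {y z : E} (hx : x ∈ C)
    (hy : y ∈ C) (hyx : f y < f x) (hz : z ∈ openSegment 𝕜 x y) : f z < f x :=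
  lt_of_not_ge fun hxz ↦ (hf.lt_left_of_right_lt hx hy hz (hyx.trans_le hxz)).not_ge hxz

lemma mem_extremePoints_insert_setOf_lt (hf : ConvexOn 𝕜 C f) (hx : x ∈ C) :
    x ∈ (insert x {y ∈ C | f y < f x}).extremePoints 𝕜 := by
  refine mem_extremePoints_iff_left.2 ⟨Set.mem_insert _ _, ?_⟩
  rintro p (rfl | hp) q hq hxpq
  · rfl
  · have hxq : f x < f q :=
      hf.lt_right_of_left_lt hp.1 (Set.insert_subset hx (Set.sep_subset _ _) hq) hxpq hp.2
    obtain rfl | hq := hq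
    exacts [absurd hxq (lt_irrefl _), absurd hxq hq.2.not_gt]

variable [ZeroLEOneClass 𝕜]

lemma convex_insert_setOf_lt (hf : ConvexOn 𝕜 C f) (hx : x ∈ C) :
    Convex 𝕜 (insert x {y ∈ C | f y < f x}) := by
  have hstar : ∀ q ∈ {y ∈ C | f y < f x}, openSegment 𝕜 x q ⊆ {y ∈ C | f y < f x} :=
    fun q hq z hz ↦ ⟨hf.1.openSegment_subset hx hq.1 hz,
      lt_left_of_mem_openSegment_of_convexOn hf hx hq.1 hq.2 hz⟩
  rw [convex_iff_openSegment_subset]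
  rintro p (rfl | hp) q (rfl | hq)
  · rintro z ⟨s, t, -, -, hst, rfl⟩
    exact .inl (Convex.combo_self hst q)
  · exact (hstar q hq).trans (Set.subset_insert _ _)
  · rw [openSegment_symm]
    exact (hstar p hp).trans (Set.subset_insert _ _)
  · exact ((hf.convex_lt (f x)).openSegment_subset hp hq).trans (Set.subset_insert _ _)

theorem mem_extremePoints_convexHull_of_forall_lt (hf : ConvexOn 𝕜 C f) (hSC : S ⊆ C)
    (hx : x ∈ S) (hmax : ∀ y ∈ S, y ≠ x → f y < f x) :
    x ∈ (convexHull 𝕜 S).extremePoints 𝕜 := by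
  have hsub : convexHull 𝕜 S ⊆ insert x {y ∈ C | f y < f x} :=
    convexHull_min (fun y hy ↦ or_iff_not_imp_left.2 fun hyx ↦ ⟨hSC hy, hmax y hy hyx⟩)
      (convex_insert_setOf_lt hf (hSC hx))
  exact inter_extremePoints_subset_extremePoints_of_subset hsub
    ⟨subset_convexHull 𝕜 S hx, mem_extremePoints_insert_setOf_lt hf (hSC hx)⟩

end StrictMaximum

section Coordinate

variable {ι : Type*} {S : Set (EuclideanSpace ℝ ι)} {x : EuclideanSpace ℝ ι}

lemma mem_extremePoints_convexHull_of_forall_apply_lt (i : ι) (hx : x ∈ S)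
    (hmax : ∀ y ∈ S, y ≠ x → y i < x i) : x ∈ (convexHull ℝ S).extremePoints ℝ :=
  mem_extremePoints_convexHull_of_forall_lt
    ((EuclideanSpace.proj i).toLinearMap.convexOn convex_univ) (Set.subset_univ S) hx hmax

lemma mem_extremePoints_convexHull_of_forall_lt_apply (i : ι) (hx : x ∈ S)
    (hmin : ∀ y ∈ S, y ≠ x → x i < y i) : x ∈ (convexHull ℝ S).extremePoints ℝ :=
  mem_extremePoints_convexHull_of_forall_lt
    ((EuclideanSpace.proj i).toLinearMap.concaveOn convex_univ).neg (Set.subset_univ S) hx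
    fun y hy hyx ↦ neg_lt_neg (hmin y hy hyx)

end Coordinate

lemma pt_apply_zero (x y : ℝ) : pt x y 0 = x := rfl

theorem one_shifted_point_extreme_general (a : ℝ) (ha : a ≠ 0) (S : Set Plane)
    (hS : S = {pt (-1) (-1), pt (-1) 1, pt 1 1, pt 1 (-1), pt (1 + a) 0, pt (-1 + a) 0}) :
    (pt (1 + a) 0 ∈ Set.extremePoints ℝ (convexHull ℝ S) ∨
      pt (-1 + a) 0 ∈ Set.extremePoints ℝ (convexHull ℝ S)) ∧
    (0 < a → pt (1 + a) 0 ∈ Set.extremePoints ℝ (convexHull ℝ S)) ∧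
    (a < 0 → pt (-1 + a) 0 ∈ Set.extremePoints ℝ (convexHull ℝ S)) := by
  have hpos (h : 0 < a) : pt (1 + a) 0 ∈ Set.extremePoints ℝ (convexHull ℝ S) := by
    refine mem_extremePoints_convexHull_of_forall_apply_lt 0 (by simp [hS]) ?_
    rw [hS]
    rintro p (rfl | rfl | rfl | rfl | rfl | rfl) hp <;> simp only [pt_apply_zero] <;>
      first | linarith | exact absurd rfl hp
  have hneg (h : a < 0) : pt (-1 + a) 0 ∈ Set.extremePoints ℝ (convexHull ℝ S) := by
    refine mem_extremePoints_convexHull_of_forall_lt_apply 0 (by simp [hS]) ?_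
    rw [hS]
    rintro p (rfl | rfl | rfl | rfl | rfl | rfl) hp <;> simp only [pt_apply_zero] <;>
      first | linarith | exact absurd rfl hp
  exact ⟨ha.gt_or_lt.imp hpos hneg, hpos, hneg⟩

/-- For `a ≠ 0` with `|a| < 2` and
`S = {(-1,-1), (-1,1), (1,1), (1,-1), (1+a,0), (-1+a,0)}`, at least one of the two points
`(1+a,0)` and `(-1+a,0)` is an extreme point of the convex hull of `S`; specifically
`(1+a,0)` is extreme if `a > 0` and `(-1+a,0)` is extreme if `a < 0`. -/
theorem one_shifted_point_extreme (a : ℝ) (ha : a ≠ 0) (ha2 : |a| < 2) (S : Set Plane)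
    (hS : S = {pt (-1) (-1), pt (-1) 1, pt 1 1, pt 1 (-1), pt (1 + a) 0, pt (-1 + a) 0}) :
    (pt (1 + a) 0 ∈ Set.extremePoints ℝ (convexHull ℝ S) ∨
      pt (-1 + a) 0 ∈ Set.extremePoints ℝ (convexHull ℝ S)) ∧
    (0 < a → pt (1 + a) 0 ∈ Set.extremePoints ℝ (convexHull ℝ S)) ∧
    (a < 0 → pt (-1 + a) 0 ∈ Set.extremePoints ℝ (convexHull ℝ S)) :=
  one_shifted_point_extreme_general a ha S hS
end
end

section
/- Let S be a finite set of at least three points in ℝ² such that no three pairwise distinct points of S are collinear and such that the origin lies in the interior of the convex hull of S. For distinct points a, b ∈ S with the origin not on the line L_{a,b} through a and b, let H_{a,b} denote the closed half-plane bounded by L_{a,b} that contains the origin. Then the convex hull of S equals the intersection of the half-planes H_{a,b} taken over all pairs of distinct points a, b ∈ S with S ⊆ H_{a,b}. -/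
open scoped InnerProductSpace

noncomputable section

/-- Rotation of a vector by a quarter turn, giving a normal to the line through `a` and `b`
when applied to `b - a`. -/
def rot (v : Plane) : Plane := pt (-(v 1)) (v 0)

/-- `Hside a b` is the closed half-plane bounded by the line through `a` and `b` that
contains the origin (meaningful when `a ≠ b` and the origin is not on the line): the set of
points whose signed distance from the line has the same sign as that of the origin, or is
zero. -/
def Hside (a b : Plane) : Set Plane :=
  {x : Plane | 0 ≤ ⟪rot (b - a), x - a⟫_ℝ * ⟪rot (b - a), (0 : Plane) - a⟫_ℝ}

/-!
Polarity exchanges the points and the edges of a convex polygon around the origin. By the bipolar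
theorem the convex hull of `S` is cut out by the inequalities `⟪f, x⟫ ≤ 1` with `f` in the polar of
`S`. That polar is compact, so by Krein–Milman its extreme points `f` suffice. If the points of `S`
with `⟪f, s⟫ = 1` did not span, `f` could be moved both ways along a vector orthogonal to all of
them without leaving the polar; hence at an extreme `f` two distinct points `a`, `b` of `S` satisfy
`⟪f, s⟫ = 1`, and `⟪f, x⟫ ≤ 1` is the half-plane `Hside a b`.
-/

section Polar

variable {E : Type*} [NormedAddCommGroup E] [InnerProductSpace ℝ E] {S T : Set E} {f v x : E}

/-- The one-sided polar of a set in a real inner product space, realised in the space itself by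
means of the inner product. Unlike `LinearMap.polar` it bounds `⟪f, s⟫_ℝ` and not its absolute
value, so that sets which are not symmetric about the origin can be recovered from it. -/
def innerPolar (S : Set E) : Set E := {f | ∀ s ∈ S, ⟪f, s⟫_ℝ ≤ 1}

lemma mem_innerPolar_singleton : x ∈ innerPolar {f} ↔ ⟪f, x⟫_ℝ ≤ 1 := by
  simp [innerPolar, real_inner_comm]

lemma subset_innerPolar_comm : S ⊆ innerPolar T ↔ T ⊆ innerPolar S := by
  constructor <;> exact fun h x hx y hy ↦ real_inner_comm x y ▸ h hy x hx

lemma innerPolar_antitone : Antitone (innerPolar : Set E → Set E) :=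
  fun _ _ hST _ hf s hs ↦ hf s (hST hs)

lemma innerPolar_eq_iInter (S : Set E) : innerPolar S = ⋂ s ∈ S, {f | ⟪f, s⟫_ℝ ≤ 1} := by
  ext
  simp [innerPolar]

lemma convex_innerPolar (S : Set E) : Convex ℝ (innerPolar S) := by
  rw [innerPolar_eq_iInter]
  exact convex_iInter₂ fun s _ ↦ convex_halfSpace_le ((innerₗ E).flip s).isLinear 1

lemma isClosed_innerPolar (S : Set E) : IsClosed (innerPolar S) := by
  rw [innerPolar_eq_iInter]
  exact isClosed_biInter fun s _ ↦ isClosed_le (by fun_prop) continuous_const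

lemma innerPolar_convexHull (S : Set E) : innerPolar (convexHull ℝ S) = innerPolar S := by
  refine (innerPolar_antitone (subset_convexHull ℝ S)).antisymm ?_
  rw [subset_innerPolar_comm, (convex_innerPolar _).convexHull_subset_iff, subset_innerPolar_comm]

lemma innerPolar_closure (S : Set E) : innerPolar (closure S) = innerPolar S := by
  refine (innerPolar_antitone subset_closure).antisymm ?_
  rw [subset_innerPolar_comm, (isClosed_innerPolar _).closure_subset_iff, subset_innerPolar_comm]

theorem innerPolar_innerPolar [CompleteSpace E] (hconv : Convex ℝ S) (hclosed : IsClosed S)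
    (h0 : 0 ∈ S) : innerPolar (innerPolar S) = S := by
  refine Set.Subset.antisymm (fun x hx ↦ ?_) (subset_innerPolar_comm.mp Set.Subset.rfl)
  by_contra hxS
  obtain ⟨g, u, hgS, hgx⟩ := geometric_hahn_banach_closed_point hconv hclosed hxS
  have hu : 0 < u := by simpa using hgS 0 h0
  set f : E := u⁻¹ • (InnerProductSpace.toDual ℝ E).symm g
  have inner_f (y : E) : ⟪f, y⟫_ℝ = u⁻¹ * g y := by
    rw [real_inner_smul_left, InnerProductSpace.toDual_symm_apply]
  have hf : f ∈ innerPolar S := fun s hs ↦ by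
    rw [inner_f, inv_mul_le_one₀ hu]
    exact (hgS s hs).le
  have hfx : ⟪f, x⟫_ℝ ≤ 1 := real_inner_comm x f ▸ hx f hf
  rw [inner_f, inv_mul_le_one₀ hu] at hfx
  exact hfx.not_gt hgx

lemma innerPolar_closedBall_subset {r : ℝ} (hr : 0 < r) :
    innerPolar (Metric.closedBall (0 : E) r) ⊆ Metric.closedBall 0 r⁻¹ := by
  intro f hf
  rw [mem_closedBall_zero_iff]
  rcases eq_or_ne f 0 with rfl | hf0
  · simpa using hr.le
  have hf_norm : ‖f‖ ≠ 0 := norm_ne_zero_iff.mpr hf0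
  have hmem : (r / ‖f‖) • f ∈ Metric.closedBall (0 : E) r := by
    rw [mem_closedBall_zero_iff, norm_smul, norm_div, norm_norm, div_mul_cancel₀ _ hf_norm,
      Real.norm_of_nonneg hr.le]
  have hinner : ⟪f, (r / ‖f‖) • f⟫_ℝ = r * ‖f‖ := by
    rw [real_inner_smul_right, real_inner_self_eq_norm_sq]
    field_simp
  rw [← one_div, le_div_iff₀' hr, ← hinner]
  exact hf _ hmem

lemma isBounded_innerPolar (h0 : S ∈ nhds 0) : Bornology.IsBounded (innerPolar S) := by
  obtain ⟨r, hr, hball⟩ := Metric.nhds_basis_closedBall.mem_iff.mp h0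
  exact Metric.isBounded_closedBall.subset <|
    (innerPolar_antitone hball).trans (innerPolar_closedBall_subset hr)

theorem innerPolar_extremePoints_innerPolar [FiniteDimensional ℝ E] (hconv : Convex ℝ S)
    (hclosed : IsClosed S) (h0 : S ∈ nhds 0) :
    innerPolar ((innerPolar S).extremePoints ℝ) = S := by
  have := FiniteDimensional.proper_real E
  have hcompact : IsCompact (innerPolar S) :=
    Metric.isCompact_of_isClosed_isBounded (isClosed_innerPolar S) (isBounded_innerPolar h0)
  rw [← innerPolar_convexHull, ← innerPolar_closure,
    closure_convexHull_extremePoints hcompact (convex_innerPolar S),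
    innerPolar_innerPolar hconv hclosed (mem_of_mem_nhds h0)]

lemma eventually_add_smul_mem_innerPolar (hS : S.Finite) (hf : f ∈ innerPolar S)
    (hv : ∀ s ∈ S, ⟪f, s⟫_ℝ = 1 → ⟪v, s⟫_ℝ = 0) :
    ∀ᶠ t : ℝ in nhds 0, f + t • v ∈ innerPolar S := by
  refine (Filter.eventually_all_finite hS).mpr fun s hs ↦ ?_
  rcases (hf s hs).lt_or_eq with hlt | heq
  · have hcont : ContinuousAt (fun t : ℝ ↦ ⟪f + t • v, s⟫_ℝ) 0 := by fun_prop
    exact (hcont.eventually_lt continuousAt_const (by simpa using hlt)).mono fun _ ↦ le_of_lt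
  · refine Filter.Eventually.of_forall fun t ↦ ?_
    rw [inner_add_left, real_inner_smul_left, hv s hs heq, heq, mul_zero, add_zero]

theorem span_eq_top_of_mem_extremePoints_innerPolar (hS : S.Finite)
    (hf : f ∈ (innerPolar S).extremePoints ℝ) :
    Submodule.span ℝ {s ∈ S | ⟪f, s⟫_ℝ = 1} = ⊤ := by
  have hfin : {s ∈ S | ⟪f, s⟫_ℝ = 1}.Finite := hS.subset (Set.sep_subset _ _)
  have := FiniteDimensional.span_of_finite ℝ hfin
  rw [← Submodule.orthogonal_eq_bot_iff, Submodule.eq_bot_iff]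
  intro v hv
  have hv_tight (s) (hs : s ∈ S) (hfs : ⟪f, s⟫_ℝ = 1) : ⟪v, s⟫_ℝ = 0 :=
    Submodule.inner_left_of_mem_orthogonal (Submodule.subset_span (Set.mem_sep hs hfs)) hv
  have hadd := eventually_add_smul_mem_innerPolar hS hf.1 hv_tight
  have hsub := eventually_add_smul_mem_innerPolar (v := -v) hS hf.1 fun s hs hfs ↦ by
    rw [inner_neg_left, hv_tight s hs hfs, neg_zero]
  obtain ⟨t, ⟨hmem_add, hmem_sub⟩, ht⟩ :=
    (((hadd.and hsub).filter_mono nhdsWithin_le_nhds).and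
      (self_mem_nhdsWithin (s := {(0 : ℝ)}ᶜ))).exists
  have hmid : f ∈ openSegment ℝ (f + t • v) (f + t • -v) := by
    refine ⟨1 / 2, 1 / 2, by norm_num, by norm_num, by norm_num, ?_⟩
    module
  have htv : t • v = 0 := by simpa using hf.2 hmem_add hmem_sub hmid
  exact (smul_eq_zero.mp htv).resolve_left ht

end Polar

lemma nontrivial_of_span_eq_top {R M : Type*} [Ring R] [StrongRankCondition R] [AddCommGroup M]
    [Module R M] {T : Set M} (hM : 1 < Module.finrank R M) (hT : Submodule.span R T = ⊤) :
    T.Nontrivial := by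
  by_contra hsub
  rw [Set.not_nontrivial_iff] at hsub
  have := hsub.finite.fintype
  have hcard : T.toFinset.card ≤ 1 := by
    simpa [Finset.card_le_one] using hsub
  have hrank := finrank_span_le_card (R := R) T
  rw [hT, finrank_top] at hrank
  omega

section Plane

variable {S : Set Plane} {a b f u v : Plane}

lemma inner_eq_coord (u v : Plane) : ⟪u, v⟫_ℝ = u 0 * v 0 + u 1 * v 1 := by
  simp [PiLp.inner_apply, Fin.sum_univ_two, mul_comm]

lemma rot_apply_zero (v : Plane) : rot v 0 = -v 1 := rfl

lemma rot_apply_one (v : Plane) : rot v 1 = v 0 := rfl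

lemma inner_self_smul_rot (u v : Plane) :
    ⟪u, u⟫_ℝ • rot v = ⟪u, v⟫_ℝ • rot u - ⟪rot u, v⟫_ℝ • u := by
  simp only [inner_eq_coord]
  ext i
  fin_cases i <;> simp [rot_apply_zero, rot_apply_one] <;> ring

lemma rot_ne_zero (hv : v ≠ 0) : rot v ≠ 0 := by
  contrapose! hv
  ext i
  fin_cases i
  · simpa [rot_apply_one] using congrArg (· 1) hv
  · simpa [rot_apply_zero] using congrArg (· 0) hv

lemma exists_rot_eq_smul_of_inner_eq_zero (hu : u ≠ 0) (huv : ⟪u, v⟫_ℝ = 0) :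
    ∃ c : ℝ, rot v = c • u := by
  refine ⟨(⟪u, u⟫_ℝ)⁻¹ * -⟪rot u, v⟫_ℝ, ?_⟩
  rw [mul_smul, eq_inv_smul_iff₀ (inner_self_ne_zero.mpr hu), inner_self_smul_rot, huv]
  module

lemma Hside_eq_innerPolar (hab : a ≠ b) (ha : ⟪f, a⟫_ℝ = 1) (hb : ⟪f, b⟫_ℝ = 1) :
    Hside a b = innerPolar {f} := by
  have hf : f ≠ 0 := by
    rintro rfl
    simp at ha
  obtain ⟨c, hc⟩ : ∃ c : ℝ, rot (b - a) = c • f :=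
    exists_rot_eq_smul_of_inner_eq_zero hf (by rw [inner_sub_right, ha, hb, sub_self])
  have hc0 : c ≠ 0 := by
    rintro rfl
    exact rot_ne_zero (sub_ne_zero.mpr hab.symm) (by simpa using hc)
  ext x
  have hprod : ⟪rot (b - a), x - a⟫_ℝ * ⟪rot (b - a), 0 - a⟫_ℝ = c ^ 2 * (1 - ⟪f, x⟫_ℝ) := by
    simp only [hc, real_inner_smul_left, inner_sub_right, inner_zero_right, ha]
    ring
  rw [mem_innerPolar_singleton, Hside, Set.mem_ofPred_eq, hprod,
    mul_nonneg_iff_of_pos_left (by positivity), sub_nonneg]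

lemma zero_notMem_line (ha : ⟪f, a⟫_ℝ = 1) (hb : ⟪f, b⟫_ℝ = 1) : (0 : Plane) ∉ line a b := by
  rw [line, mem_affineSpan_pair_iff_exists_lineMap_eq]
  rintro ⟨t, ht⟩
  have hf : ⟪f, AffineMap.lineMap a b t⟫_ℝ = 1 := by
    simp [AffineMap.lineMap_apply, inner_add_right, inner_smul_right, inner_sub_right, ha, hb]
  simp [ht] at hf

lemma convex_Hside (a b : Plane) : Convex ℝ (Hside a b) := by
  have hlin (x : Plane) : ⟪rot (b - a), x - a⟫_ℝ * ⟪rot (b - a), 0 - a⟫_ℝ =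
      ⟪⟪rot (b - a), 0 - a⟫_ℝ • rot (b - a), x⟫_ℝ -
        ⟪⟪rot (b - a), 0 - a⟫_ℝ • rot (b - a), a⟫_ℝ := by
    rw [← inner_sub_right, real_inner_smul_left, mul_comm]
  simp only [Hside, hlin, sub_nonneg]
  exact convex_halfSpace_ge (innerₗ Plane _).isLinear _

lemma exists_ne_inner_eq_one (hS : S.Finite) (hf : f ∈ (innerPolar S).extremePoints ℝ) :
    ∃ a ∈ S, ∃ b ∈ S, a ≠ b ∧ ⟪f, a⟫_ℝ = 1 ∧ ⟪f, b⟫_ℝ = 1 := by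
  obtain ⟨a, ⟨ha, hfa⟩, b, ⟨hb, hfb⟩, hab⟩ :=
    nontrivial_of_span_eq_top (by simp) (span_eq_top_of_mem_extremePoints_innerPolar hS hf)
  exact ⟨a, ha, b, hb, hab, hfa, hfb⟩

theorem convexHull_eq_iInter_halfplanes_general (hS : S.Finite)
    (h0 : (0 : Plane) ∈ interior (convexHull ℝ S)) :
    convexHull ℝ S =
      ⋂ (a : Plane) (_ : a ∈ S) (b : Plane) (_ : b ∈ S) (_ : a ≠ b)
        (_ : (0 : Plane) ∉ line a b) (_ : S ⊆ Hside a b), Hside a b := by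
  refine Set.Subset.antisymm (fun x hx ↦ ?_) (fun x hx ↦ ?_)
  · simp only [Set.mem_iInter]
    exact fun a _ b _ _ _ hSab ↦ convexHull_min hSab (convex_Hside a b) hx
  · rw [← innerPolar_extremePoints_innerPolar (convex_convexHull ℝ S)
      (hS.isClosed_convexHull ℝ) (mem_interior_iff_mem_nhds.mp h0), innerPolar_convexHull,
      ← Set.singleton_subset_iff, subset_innerPolar_comm]
    simp only [Set.mem_iInter] at hx
    intro f hf
    obtain ⟨a, ha, b, hb, hab, hfa, hfb⟩ := exists_ne_inner_eq_one hS hf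
    have hside := Hside_eq_innerPolar hab hfa hfb
    have hSab : S ⊆ Hside a b := by
      rw [hside, subset_innerPolar_comm, Set.singleton_subset_iff]
      exact hf.1
    have hxf : x ∈ innerPolar {f} :=
      hside ▸ hx a ha b hb hab (zero_notMem_line hfa hfb) hSab
    rwa [← Set.singleton_subset_iff, subset_innerPolar_comm, Set.singleton_subset_iff] at hxf

end Plane

/-- Let `S` be a finite set of at least three points of the plane, no three pairwise
distinct points collinear, with the origin in the interior of the convex hull of `S`.  Then
the convex hull of `S` is the intersection of the closed half-planes `Hside a b`, over all
pairs of distinct `a, b ∈ S` with the origin off the line through `a` and `b` and with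
`S ⊆ Hside a b`. -/
theorem convexHull_eq_iInter_halfplanes
    (S : Finset Plane) (hScard : 3 ≤ S.card)
    (hgen : ∀ x ∈ S, ∀ y ∈ S, ∀ z ∈ S, x ≠ y → x ≠ z → y ≠ z → x ∉ line y z)
    (h0 : (0 : Plane) ∈ interior (convexHull ℝ (S : Set Plane))) :
    convexHull ℝ (S : Set Plane) =
      ⋂ (a : Plane) (_ : a ∈ S) (b : Plane) (_ : b ∈ S) (_ : a ≠ b)
        (_ : (0 : Plane) ∉ line a b) (_ : (S : Set Plane) ⊆ Hside a b), Hside a b := by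
  exact convexHull_eq_iInter_halfplanes_general S.finite_toSet h0
end
end
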